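/- For real parameters a > 0 and b > 0, consider the series S^{a,b} = ∑_{i=3}^∞ (1 − (log i/i)·(a(1 + sin²(√(log log i/log i))) + b·sin(iπ/4)))^i. Then S^{a,b} converges if a − b > 1 and diverges if a + b < 1. -/

import Mathlib

open Filter

/-!
The `i`-th term is `(1 - c i * log i / i) ^ i`, which behaves like `i ^ (-c i)`, so the series
compares with a `p`-series as soon as `c` stays on one side of `1`. Here `c i` is
`a + b * sin (i * π / 4)` up to a null sequence. Its lower limit is `a - |b|`, approached along a
whole residue class mod `8`, over which the harmonic series still diverges; hence `a - |b|` alone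
decides the behaviour of the series unless it equals `1`.
-/

section SeriesOfRealTerms

open Topology

lemma tendsto_sum_Icc_atTop_iff {G : Type*} [AddCommGroup G] [TopologicalSpace G]
    [ContinuousAdd G] (f : ℕ → G) (m : ℕ) (l : G) :
    Tendsto (fun N => ∑ i ∈ Finset.Icc m N, f i) atTop (𝓝 l) ↔
      Tendsto (fun n => ∑ i ∈ Finset.range n, f i) atTop (𝓝 (l + ∑ i ∈ Finset.range m, f i)) := by
  have sum_split (N : ℕ) : ∑ i ∈ Finset.range (N + (m + 1)), f i =
      ∑ i ∈ Finset.Icc m (N + m), f i + ∑ i ∈ Finset.range m, f i := by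
    rw [← Finset.Ico_succ_right_eq_Icc, Order.succ_eq_add_one,
      Finset.sum_Ico_eq_sub f (by lia : m ≤ N + m + 1), sub_add_cancel, add_assoc]
  rw [← tendsto_add_atTop_iff_nat (f := fun N => ∑ i ∈ Finset.Icc m N, f i) m,
    ← tendsto_add_atTop_iff_nat (f := fun n => ∑ i ∈ Finset.range n, f i) (m + 1)]
  simp only [sum_split, tendsto_add_const_iff]

lemma summable_of_tendsto_sum_range_of_eventually_nonneg {f : ℕ → ℝ} {l : ℝ}
    (hf : ∀ᶠ i in atTop, 0 ≤ f i)
    (hl : Tendsto (fun n => ∑ i ∈ Finset.range n, f i) atTop (𝓝 l)) : Summable f := by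
  obtain ⟨m, hm⟩ := eventually_atTop.1 hf
  have sum_tail (n : ℕ) : ∑ i ∈ Finset.range (n + m), f i - ∑ i ∈ Finset.range m, f i =
      ∑ i ∈ Finset.range n, f (i + m) := by
    rw [add_comm n m, Finset.sum_range_add, add_sub_cancel_left]
    simp only [add_comm m]
  have tail : HasSum (fun i => f (i + m)) (l - ∑ i ∈ Finset.range m, f i) :=
    (hasSum_iff_tendsto_nat_of_nonneg (fun i => hm _ (Nat.le_add_left m i)) _).2
      ((((tendsto_add_atTop_iff_nat m).2 hl).sub_const _).congr sum_tail)
  exact (summable_nat_add_iff m).1 tail.summable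

lemma exists_tendsto_sum_Icc_iff_summable {f : ℕ → ℝ} (hf : ∀ᶠ i in atTop, 0 ≤ f i) (m : ℕ) :
    (∃ l, Tendsto (fun N => ∑ i ∈ Finset.Icc m N, f i) atTop (𝓝 l)) ↔ Summable f := by
  constructor
  · rintro ⟨l, hl⟩
    exact summable_of_tendsto_sum_range_of_eventually_nonneg hf
      ((tendsto_sum_Icc_atTop_iff f m l).1 hl)
  · intro hs
    refine ⟨∑' i, f i - ∑ i ∈ Finset.range m, f i, (tendsto_sum_Icc_atTop_iff f m _).2 ?_⟩
    simpa only [sub_add_cancel] using hs.hasSum.tendsto_sum_nat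

end SeriesOfRealTerms

section LogPowTerm

open Real Topology

/-- The term `(1 - (log i / i) * c i) ^ i`, comparable to `i ^ (-c i)`, of a series with
exponents `c`. -/
noncomputable def logPowTerm (c : ℕ → ℝ) (i : ℕ) : ℝ :=
  (1 - (log i / i) * c i) ^ i

lemma tendsto_log_div_self_atTop : Tendsto (fun x : ℝ => log x / x) atTop (𝓝 0) :=
  isLittleO_log_id_atTop.tendsto_div_nhds_zero

lemma tendsto_log_natCast_div_self_atTop : Tendsto (fun i : ℕ => log i / i) atTop (𝓝 0) :=
  tendsto_log_div_self_atTop.comp tendsto_natCast_atTop_atTop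

lemma log_natCast_div_self_nonneg (i : ℕ) : 0 ≤ log i / i :=
  div_nonneg (log_natCast_nonneg i) i.cast_nonneg

variable {c : ℕ → ℝ}

lemma eventually_log_div_mul_le_one {C : ℝ} (hc : ∀ᶠ i in atTop, c i ≤ C) :
    ∀ᶠ i : ℕ in atTop, (log i / i) * c i ≤ 1 := by
  have lim : Tendsto (fun i : ℕ => (log i / i) * C) atTop (𝓝 0) := by
    simpa only [zero_mul] using tendsto_log_natCast_div_self_atTop.mul_const C
  filter_upwards [lim.eventually_le_const one_pos, hc] with i hi hci
  exact (mul_le_mul_of_nonneg_left hci (log_natCast_div_self_nonneg i)).trans hi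

lemma logPowTerm_nonneg {i : ℕ} (h : (log i / i) * c i ≤ 1) : 0 ≤ logPowTerm c i :=
  pow_nonneg (sub_nonneg.2 h) i

lemma logPowTerm_le_rpow_neg {i : ℕ} (hi : i ≠ 0) (h : (log i / i) * c i ≤ 1) :
    logPowTerm c i ≤ (i : ℝ) ^ (-c i) := by
  have i_pos : (0 : ℝ) < i := Nat.cast_pos.2 hi.bot_lt
  rw [div_mul_eq_mul_div] at h
  calc logPowTerm c i = (1 - log i * c i / i) ^ i := by rw [logPowTerm, div_mul_eq_mul_div]
    _ ≤ exp (-(log i * c i)) := one_sub_div_pow_le_exp_neg ((div_le_one i_pos).1 h)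
    _ = (i : ℝ) ^ (-c i) := by rw [rpow_def_of_pos i_pos, mul_neg]

theorem summable_logPowTerm {p : ℝ} (hp : 1 < p) (hpc : ∀ᶠ i in atTop, p ≤ c i)
    (hc : ∀ᶠ i : ℕ in atTop, (log i / i) * c i ≤ 1) : Summable (logPowTerm c) := by
  refine .of_norm_bounded_eventually_nat (summable_nat_rpow.2 (neg_lt_neg hp)) ?_
  filter_upwards [hpc, hc, eventually_ge_atTop 1] with i hpi hci hi
  rw [norm_of_nonneg (logPowTerm_nonneg hci)]
  calc logPowTerm c i ≤ (i : ℝ) ^ (-c i) := logPowTerm_le_rpow_neg (by lia) hci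
    _ ≤ (i : ℝ) ^ (-p) := rpow_le_rpow_of_exponent_le (mod_cast hi) (neg_le_neg hpi)

lemma exp_neg_le_one_sub_mul {q x : ℝ} (hx : 0 ≤ x) (hq : q * (1 + x) ≤ 1) :
    exp (-x) ≤ 1 - q * x := by
  have one_add_pos : 0 < 1 + x := by positivity
  calc exp (-x) ≤ (1 + x)⁻¹ := by
        rw [exp_neg]
        exact inv_anti₀ one_add_pos (by linarith [add_one_le_exp x])
    _ ≤ 1 - q * x := by
        rw [inv_le_iff_one_le_mul₀ one_add_pos]
        linarith [mul_le_mul_of_nonneg_right hq hx]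

lemma one_div_le_logPowTerm {i : ℕ} (hi : i ≠ 0) (h : c i * (1 + log i / i) ≤ 1) :
    1 / (i : ℝ) ≤ logPowTerm c i := by
  have i_pos : (0 : ℝ) < i := Nat.cast_pos.2 hi.bot_lt
  calc 1 / (i : ℝ) = exp (-(log i / i)) ^ i := by
        rw [← exp_nat_mul, mul_neg, mul_div_cancel₀ _ i_pos.ne', exp_neg, exp_log i_pos, one_div]
    _ ≤ (1 - c i * (log i / i)) ^ i :=
        pow_le_pow_left₀ (exp_pos _).le
          (exp_neg_le_one_sub_mul (log_natCast_div_self_nonneg i) h) i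
    _ = logPowTerm c i := by rw [logPowTerm, mul_comm]

theorem not_summable_logPowTerm {q : ℝ} (hq : q < 1) {s : Set ℕ}
    (hs : ¬ Summable (s.indicator fun i : ℕ => 1 / (i : ℝ)))
    (hcq : ∀ᶠ i in atTop, i ∈ s → c i ≤ q) : ¬ Summable (logPowTerm c) := by
  intro summable_term
  have lim : Tendsto (fun i : ℕ => q * (1 + log i / i)) atTop (𝓝 q) := by
    simpa only [add_zero, mul_one] using
      (tendsto_log_natCast_div_self_atTop.const_add 1).const_mul q
  refine hs (.of_norm_bounded_eventually_nat (summable_term.indicator s) ?_)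
  filter_upwards [lim.eventually_le_const hq, hcq, eventually_ge_atTop 1] with i hqi hci hi
  by_cases his : i ∈ s
  · rw [Set.indicator_of_mem his, Set.indicator_of_mem his, norm_of_nonneg (by positivity)]
    have one_add_nonneg : 0 ≤ 1 + log i / i := add_nonneg one_pos.le (log_natCast_div_self_nonneg i)
    exact one_div_le_logPowTerm (by lia)
      ((mul_le_mul_of_nonneg_right (hci his) one_add_nonneg).trans hqi)
  · rw [Set.indicator_of_notMem his, Set.indicator_of_notMem his, norm_zero]

end LogPowTerm

section OscillatingExponent

open Real Topology

/-- The exponents `c i` of the series `S^{a,b}`, whose `i`-th term is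
`logPowTerm (oscillatingExponent a b) i`. -/
noncomputable def oscillatingExponent (a b : ℝ) (i : ℕ) : ℝ :=
  a * (1 + sin √(log (log i) / log i) ^ 2) + b * sin (i * π / 4)

lemma tendsto_oscillatingExponent_sub (a b : ℝ) :
    Tendsto (fun i : ℕ => oscillatingExponent a b i - b * sin (i * π / 4)) atTop (𝓝 a) := by
  have lim : Tendsto (fun i : ℕ => log (log i) / log i) atTop (𝓝 0) :=
    tendsto_log_div_self_atTop.comp (tendsto_log_atTop.comp tendsto_natCast_atTop_atTop)
  have cont : Continuous fun t : ℝ => a * (1 + sin √t ^ 2) := by fun_prop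
  simpa [oscillatingExponent, Function.comp_def] using (cont.tendsto 0).comp lim

lemma abs_mul_sin_le_abs (b x : ℝ) : |b * sin x| ≤ |b| := by
  rw [abs_mul]
  exact mul_le_of_le_one_right (abs_nonneg b) (abs_sin_le_one x)

lemma eventually_le_oscillatingExponent {a b p : ℝ} (h : p < a - |b|) :
    ∀ᶠ i in atTop, p ≤ oscillatingExponent a b i := by
  filter_upwards [(tendsto_oscillatingExponent_sub a b).eventually_const_le
    (lt_sub_iff_add_lt.1 h)] with i hi
  linarith [neg_le_of_abs_le (abs_mul_sin_le_abs b (i * π / 4))]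

lemma eventually_oscillatingExponent_le {a b C : ℝ} (h : a + |b| < C) :
    ∀ᶠ i in atTop, oscillatingExponent a b i ≤ C := by
  filter_upwards [(tendsto_oscillatingExponent_sub a b).eventually_le_const
    (lt_sub_iff_add_lt.2 h)] with i hi
  linarith [le_of_abs_le (abs_mul_sin_le_abs b (i * π / 4))]

lemma sin_natCast_mul_pi_div_four_congr {i j : ℕ} (h : (i : ZMod 8) = j) :
    sin (i * π / 4) = sin (j * π / 4) := by
  obtain ⟨k, hk⟩ := Nat.modEq_iff_dvd.1 ((ZMod.natCast_eq_natCast_iff j i 8).1 h.symm)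
  have i_eq : (i : ℝ) = j + 8 * k := mod_cast (by lia : (i : ℤ) = j + 8 * k)
  rw [← sin_add_int_mul_two_pi (j * π / 4) k, i_eq]
  congr 1
  ring

lemma exists_residue_mul_sin_eq_neg_abs (b : ℝ) :
    ∃ k : ZMod 8, ∀ i : ℕ, (i : ZMod 8) = k → b * sin (i * π / 4) = -|b| := by
  rcases le_total 0 b with hb | hb
  · refine ⟨(6 : ℕ), fun i hi => ?_⟩
    have angle : ((6 : ℕ) : ℝ) * π / 4 = π / 2 + π := by push_cast; ring
    rw [sin_natCast_mul_pi_div_four_congr hi, angle, sin_add_pi, sin_pi_div_two, abs_of_nonneg hb,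
      mul_neg_one]
  · refine ⟨(2 : ℕ), fun i hi => ?_⟩
    have angle : ((2 : ℕ) : ℝ) * π / 4 = π / 2 := by push_cast; ring
    rw [sin_natCast_mul_pi_div_four_congr hi, angle, sin_pi_div_two, abs_of_nonpos hb, mul_one,
      neg_neg]

lemma exists_residue_eventually_oscillatingExponent_le {a b q : ℝ} (h : a - |b| < q) :
    ∃ k : ZMod 8, ∀ᶠ i : ℕ in atTop, (i : ZMod 8) = k → oscillatingExponent a b i ≤ q := by
  obtain ⟨k, hk⟩ := exists_residue_mul_sin_eq_neg_abs b
  refine ⟨k, ?_⟩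
  filter_upwards [(tendsto_oscillatingExponent_sub a b).eventually_le_const
    (sub_lt_iff_lt_add.1 h)] with i hi hik
  linarith [hk i hik]

lemma eventually_log_div_mul_oscillatingExponent_le_one (a b : ℝ) :
    ∀ᶠ i : ℕ in atTop, (log i / i) * oscillatingExponent a b i ≤ 1 :=
  eventually_log_div_mul_le_one (eventually_oscillatingExponent_le (lt_add_one (a + |b|)))

theorem summable_logPowTerm_oscillatingExponent {a b : ℝ} (h : 1 < a - |b|) :
    Summable (logPowTerm (oscillatingExponent a b)) := by
  obtain ⟨p, one_lt_p, p_lt⟩ := exists_between h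
  exact summable_logPowTerm one_lt_p (eventually_le_oscillatingExponent p_lt)
    (eventually_log_div_mul_oscillatingExponent_le_one a b)

theorem not_summable_logPowTerm_oscillatingExponent {a b : ℝ} (h : a - |b| < 1) :
    ¬ Summable (logPowTerm (oscillatingExponent a b)) := by
  obtain ⟨q, lt_q, q_lt_one⟩ := exists_between h
  obtain ⟨k, hk⟩ := exists_residue_eventually_oscillatingExponent_le lt_q
  exact not_summable_logPowTerm q_lt_one (not_summable_indicator_one_div_natCast (by decide) k) hk

theorem example5_series_convergence_general (a b : ℝ) :
    (1 < a - |b| → ∃ l : ℝ, Tendsto (fun N : ℕ => ∑ i ∈ Finset.Icc 3 N,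
      logPowTerm (oscillatingExponent a b) i) atTop (𝓝 l)) ∧
    (a - |b| < 1 → ¬ ∃ l : ℝ, Tendsto (fun N : ℕ => ∑ i ∈ Finset.Icc 3 N,
      logPowTerm (oscillatingExponent a b) i) atTop (𝓝 l)) := by
  rw [exists_tendsto_sum_Icc_iff_summable
    ((eventually_log_div_mul_oscillatingExponent_le_one a b).mono fun _ => logPowTerm_nonneg)]
  exact ⟨summable_logPowTerm_oscillatingExponent, not_summable_logPowTerm_oscillatingExponent⟩

end OscillatingExponent

/-- for `a > 0`, `b > 0`, the series
`S^{a,b} = ∑_{i=3}^∞ (1 - (log i / i)(a(1 + sin²(√(log log i / log i))) + b sin(iπ/4)))^i`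
converges if `a - b > 1` and diverges if `a + b < 1`. -/
theorem example5_series_convergence (a b : ℝ) (ha : 0 < a) (hb : 0 < b) :
    (1 < a - b → ∃ l : ℝ,
      Tendsto (fun N : ℕ => ∑ i ∈ Finset.Icc 3 N,
        (1 - (Real.log i / i) *
          (a * (1 + (Real.sin (Real.sqrt (Real.log (Real.log i) / Real.log i))) ^ 2) +
            b * Real.sin (i * Real.pi / 4))) ^ i) atTop (nhds l)) ∧
    (a + b < 1 → ¬ ∃ l : ℝ,
      Tendsto (fun N : ℕ => ∑ i ∈ Finset.Icc 3 N,
        (1 - (Real.log i / i) *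
          (a * (1 + (Real.sin (Real.sqrt (Real.log (Real.log i) / Real.log i))) ^ 2) +
            b * Real.sin (i * Real.pi / 4))) ^ i) atTop (nhds l)) := by
  have dichotomy := example5_series_convergence_general a b
  rw [abs_of_pos hb] at dichotomy
  exact ⟨dichotomy.1, fun h => dichotomy.2 (by linarith)⟩
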